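/- Let k ≥ 2, let n ≥ 1 and N ≥ ⌈log_k(n)⌉ + 2, let u be a word of length n over {0,1,…,N}, and let w be a word of length q ≥ 1 over Σ_k with w ∉ {0}* ∪ {k−1}*. Then u ∈ F^{(1)}_{s_{k,w}}(n,N) if and only if mirr(u) ∈ F^{(1)}_{s_{k,conj(w)}}(n,N), where conj(w) is the word obtained from w by replacing each digit d by k−1−d, and mirr(u) is the reversal of u. -/

import Mathlib

/-!
The statement reduces to words of a fixed length. Write `pw k L m` for the `L` low-order base-`k`
digits of `m`. For `m < k ^ L`, complementing every digit of `pw k L m` gives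
`pw k L (k ^ L - 1 - m)` (`pw_conj`), so on windows of fixed-length words the passage from `w` to
its complement reverses the window. It remains to compare such windows with windows of `dseq`.

* A window of fixed-length words is always a window of `dseq k w`: if `w` does not start with `0`,
  removing leading zeros does not change the number of occurrences (`dseq_eq_of_head_ne`); if `w`
  starts with `0`, putting a leading `1` in front does not change it (`dseq_eq_of_head_zero`).
* A window of `dseq k w` containing a letter `≥ ⌈log_k n⌉ + 2` consists of representations of one
  length (`dseq_crossing_le`, `dseq_crossing_ge`). Otherwise it contains both `k ^ L - 1` and `k ^ L`, so with
  `s = ⌈log_k n⌉` and up to the `s` last digits, each word is `(k-1)⋯(k-1)` or `10⋯0`. These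
  contain `w` at most once, and each further digit adds at most one occurrence
  (`occ_snoc_le`). Words of length at most `s + 1` are harmless anyway.
-/

/-- Number of occurrences of `w` as a contiguous factor of `y`
(number of starting positions `0 ≤ i ≤ |y|-1` where `w` occurs). -/
def occ (w y : List ℕ) : ℕ :=
  ((List.range y.length).filter (fun i => w.isPrefixOf (y.drop i))).length

/-- Base-`k` representation of `m`, most significant digit first, with `(0)_k = 0`. -/
def rep (k m : ℕ) : List ℕ := if m = 0 then [0] else (Nat.digits k m).reverse

/-- The `(k,w)`-digital sequence: number of occurrences of `w` in `(m)_k`. -/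
def dseq (k : ℕ) (w : List ℕ) (m : ℕ) : ℕ := occ w (rep k m)

/-- The set of factors of length `n` of the sequence `a` all of whose letters are `≤ N`. -/
def factorSet (a : ℕ → ℕ) (n N : ℕ) : Set (List ℕ) :=
  { u | (∃ i, u = (List.range n).map fun j => a (i + j)) ∧ ∀ x ∈ u, x ≤ N }

/-- The `N`-factor complexity `P_a(n,N)`. -/
noncomputable def Pc (a : ℕ → ℕ) (n N : ℕ) : ℕ := Nat.card (factorSet a n N)

/-- `F_a^{(1)}(n,N) = F_a(n,N) \ F_a(n,N-1)`. -/
def factorSet1 (a : ℕ → ℕ) (n N : ℕ) : Set (List ℕ) :=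
  factorSet a n N \ factorSet a n (N - 1)

/-- First difference of the `N`-factor complexity in the variable `N`. -/
noncomputable def Pc1 (a : ℕ → ℕ) (n N : ℕ) : ℤ := (Pc a n N : ℤ) - (Pc a n (N - 1) : ℤ)

/-- Second difference of the `N`-factor complexity in the variable `N`. -/
noncomputable def Pc2 (a : ℕ → ℕ) (n N : ℕ) : ℤ := Pc1 a n N - Pc1 a n (N - 1)

/-- The morphism `τ` on single letters: `τ(2i) = (2i)(2i+1)`, `τ(2i+1) = (2i+2)`. -/
def tauLetter (m : ℕ) : List ℕ := if m % 2 = 0 then [m, m + 1] else [m + 1]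

/-- The morphism `τ` extended to finite words by concatenation. -/
def tauWord (u : List ℕ) : List ℕ := u.flatMap tauLetter

/-- Fibonacci numbers with `F_0 = F_1 = 1`. -/
def fibW : ℕ → ℕ
  | 0 => 1
  | 1 => 1
  | n + 2 => fibW (n + 1) + fibW n

/-- `φ(n) = max {k : F_k < n}`. -/
noncomputable def phi (n : ℕ) : ℕ := sSup {k | fibW k < n}

/-- The infinite Fibonacci sequence `f = τ^∞(0)`: since `τ^{p}(0)` is a prefix of
`τ^{p+1}(0)` and `|τ^{n+1}(0)| = F_{n+2} > n`, the `n`-th letter of the fixed point is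
the `n`-th letter of `τ^{n+1}(0)`. -/
def fibSeq (n : ℕ) : ℕ := (tauWord^[n + 1] [0]).getD n 0

/-- The set of factors of length `n` of a finite word `u` all of whose letters are `≤ N`. -/
def factorSetW (u : List ℕ) (n N : ℕ) : Set (List ℕ) :=
  { v | v.length = n ∧ v <:+: u ∧ ∀ x ∈ v, x ≤ N }

/-- The `L` low-order base-`k` digits of `m`, most significant first, padded with zeros. -/
def pw (k : ℕ) : ℕ → ℕ → List ℕ
  | 0, _ => []
  | L + 1, m => pw k L (m / k) ++ [m % k]

/-! ### Counting occurrences -/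

lemma occ_cons (w : List ℕ) (d : ℕ) (y : List ℕ) :
    occ w (d :: y) = (if w <+: d :: y then 1 else 0) + occ w y := by
  unfold occ
  rw [List.length_cons, List.range_succ_eq_map, List.filter_cons, List.filter_map]
  by_cases h : w <+: d :: y
  · have h' : w.isPrefixOf (d :: y) = true := List.isPrefixOf_iff_prefix.2 h
    simp [h, h', Function.comp_def]; omega
  · have h' : w.isPrefixOf (d :: y) = false := by
      rw [← Bool.not_eq_true, List.isPrefixOf_iff_prefix]; exact h
    simp [h, h', Function.comp_def]

lemma occ_nil (w : List ℕ) : occ w [] = 0 := by simp [occ]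

lemma occ_le_length (w y : List ℕ) : occ w y ≤ y.length := by
  unfold occ
  exact (List.length_filter_le _ _).trans (by simp)

lemma occ_short (w y : List ℕ) (h : y.length < w.length) : occ w y = 0 := by
  induction y with
  | nil => exact occ_nil w
  | cons d y ih =>
    rw [occ_cons, ih (by simp at h; omega), if_neg]
    intro hp
    have := hp.length_le
    omega

lemma occ_snoc_le (w y : List ℕ) (d : ℕ) : occ w (y ++ [d]) ≤ occ w y + 1 := by
  induction y with
  | nil => simpa [occ_nil] using occ_le_length w [d]
  | cons e y ih =>
    rw [List.cons_append, occ_cons, occ_cons]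
    by_cases h : w <+: e :: y
    · have h' : w <+: e :: (y ++ [d]) := h.trans (by simp)
      rw [if_pos h, if_pos h']; omega
    · by_cases h' : w <+: e :: (y ++ [d])
      · -- the new occurrence is the whole word, so no other one fits
        have hl : (y ++ [d]).length < w.length := by
          by_contra hc
          apply h
          rw [List.prefix_iff_eq_take] at h' ⊢
          rw [h']
          have : w.length ≤ (e :: y).length := by simp at hc ⊢; omega
          rw [← List.cons_append, List.take_append_of_le_length this]
          simp
        rw [occ_short _ _ hl, if_pos h']; omega
      · rw [if_neg h, if_neg h']; omega

lemma occ_replicate (w : List ℕ) (c e : ℕ) (h : ¬ ∀ d ∈ w, d = c) :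
    occ w (List.replicate e c) = 0 := by
  induction e with
  | zero => exact occ_nil w
  | succ e ih =>
    rw [List.replicate_succ, occ_cons, ih, if_neg]
    intro hp
    apply h
    intro d hd
    have := hp.subset hd
    rw [← List.replicate_succ] at this
    exact List.eq_of_mem_replicate this

lemma occ_map (f : ℕ → ℕ) (k : ℕ) (hf : ∀ a < k, ∀ b < k, f a = f b → a = b)
    (w y : List ℕ) (hw : ∀ d ∈ w, d < k) (hy : ∀ d ∈ y, d < k) :
    occ (w.map f) (y.map f) = occ w y := by
  have key : ∀ w y : List ℕ, (∀ d ∈ w, d < k) → (∀ d ∈ y, d < k) →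
      (w.map f <+: y.map f ↔ w <+: y) := by
    intro w
    induction w with
    | nil => simp
    | cons a w ih =>
      intro y hw hy
      cases y with
      | nil => simp
      | cons b y =>
        simp only [List.map_cons, List.cons_prefix_cons]
        simp only [List.mem_cons, forall_eq_or_imp] at hw hy
        rw [ih y hw.2 hy.2]
        constructor
        · rintro ⟨h1, h2⟩; exact ⟨hf _ hw.1 _ hy.1 h1, h2⟩
        · rintro ⟨h1, h2⟩; exact ⟨by rw [h1], h2⟩
  induction y with
  | nil => simp [occ_nil]
  | cons d y ih =>
    have h1 := key w (d :: y) hw hy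
    rw [List.map_cons] at h1
    rw [List.map_cons, occ_cons, occ_cons, ih (fun e he => hy e (by simp [he]))]
    simp only [h1]

/-! ### Fixed-length digit words -/

lemma pw_lt {k : ℕ} (hk : 0 < k) (L m : ℕ) : ∀ d ∈ pw k L m, d < k := by
  induction L generalizing m with
  | zero => simp [pw]
  | succ L ih =>
    intro d hd
    simp only [pw, List.mem_append, List.mem_singleton] at hd
    rcases hd with hd | rfl
    · exact ih _ d hd
    · exact Nat.mod_lt _ hk

lemma pw_length (k L m : ℕ) : (pw k L m).length = L := by
  induction L generalizing m with
  | zero => simp [pw]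
  | succ L ih => simp [pw, ih]

lemma pw_zero (k L : ℕ) : pw k L 0 = List.replicate L 0 := by
  induction L with
  | zero => simp [pw]
  | succ L ih => simp [pw, ih, List.replicate_succ']

lemma pw_cons {k : ℕ} (hk : 2 ≤ k) (L m c : ℕ) (hc : c < k) (hm : m < k ^ L) :
    pw k (L + 1) (c * k ^ L + m) = c :: pw k L m := by
  induction L generalizing m with
  | zero =>
    have : m = 0 := by simpa using hm
    subst this
    simp [pw, Nat.mod_eq_of_lt hc]
  | succ L ih =>
    have hk0 : 0 < k := by omega
    have e : c * k ^ (L + 1) + m = m + k * (c * k ^ L) := by ring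
    have h1 : (c * k ^ (L + 1) + m) / k = c * k ^ L + m / k := by
      rw [e, Nat.add_mul_div_left _ _ hk0]; ring
    have h2 : (c * k ^ (L + 1) + m) % k = m % k := by
      rw [e, Nat.add_mul_mod_self_left]
    have h3 : m / k < k ^ L := by
      rw [Nat.div_lt_iff_lt_mul hk0, ← pow_succ]; exact hm
    rw [pw, h1, h2, ih _ h3, List.cons_append]
    rfl

lemma pw_conj {k : ℕ} (hk : 2 ≤ k) (L m : ℕ) (hm : m < k ^ L) :
    pw k L (k ^ L - 1 - m) = (pw k L m).map fun d => k - 1 - d := by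
  induction L generalizing m with
  | zero => simp [pw]
  | succ L ih =>
    have hk0 : 0 < k := by omega
    have h3 : m / k < k ^ L := by
      rw [Nat.div_lt_iff_lt_mul hk0, ← pow_succ]; exact hm
    have hr := Nat.mod_lt m hk0
    have e : k ^ (L + 1) - 1 - m = (k - 1 - m % k) + k * (k ^ L - 1 - m / k) := by
      have hd := Nat.div_add_mod m k
      obtain ⟨t, ht⟩ := Nat.exists_eq_add_of_lt h3
      obtain ⟨s, hs⟩ := Nat.exists_eq_add_of_lt hr
      have h4 : k ^ L - 1 - m / k = t := by omega
      have h5 : k - 1 - m % k = s := by omega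
      have h6 : k ^ (L + 1) = k * (m / k) + k * t + k := by rw [pow_succ, ht]; ring
      rw [h4, h5]
      omega
    have hs : k - 1 - m % k < k := by omega
    rw [pw, pw, e, Nat.add_mul_div_left _ _ hk0, Nat.add_mul_mod_self_left, Nat.mod_eq_of_lt hs,
      Nat.div_eq_of_lt hs, zero_add, ih _ h3]
    simp

lemma occ_pw_add_le (w : List ℕ) (k e s m : ℕ) :
    occ w (pw k (e + s) m) ≤ occ w (pw k e (m / k ^ s)) + s := by
  induction s generalizing m with
  | zero => simp
  | succ s ih =>
    have h := occ_snoc_le w (pw k (e + s) (m / k)) (m % k)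
    have h2 := ih (m / k)
    rw [Nat.div_div_eq_div_mul, ← pow_succ'] at h2
    rw [← add_assoc, pw]
    omega

lemma digits_eq_pw {k : ℕ} (hk : 2 ≤ k) (L m : ℕ) (h1 : k ^ L ≤ m) (h2 : m < k ^ (L + 1)) :
    (Nat.digits k m).reverse = pw k (L + 1) m := by
  induction L generalizing m with
  | zero =>
    have h3 : m < k := by simpa using h2
    have h4 : m ≠ 0 := by simp at h1; omega
    rw [Nat.digits_of_lt k m h4 h3]
    simp [pw, Nat.mod_eq_of_lt h3]
  | succ L ih =>
    have hk0 : 0 < k := by omega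
    have hm : 0 < m := lt_of_lt_of_le (by positivity) h1
    rw [Nat.digits_def' (by omega) hm, List.reverse_cons, pw, ih]
    · rw [Nat.le_div_iff_mul_le hk0, ← pow_succ]; exact h1
    · rw [Nat.div_lt_iff_lt_mul hk0, ← pow_succ]; exact h2

/-- The representation of `m` is a fixed-length word; the alternative `L = 0` covers
`(0)_k = 0`. -/
lemma rep_eq_pw {k : ℕ} (hk : 2 ≤ k) (L m : ℕ) (h1 : k ^ L ≤ m ∨ L = 0) (h2 : m < k ^ (L + 1)) :
    rep k m = pw k (L + 1) m := by
  unfold rep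
  split_ifs with h
  · subst h
    rcases h1 with h1 | rfl
    · have : 0 < k ^ L := by positivity
      omega
    · simp [pw]
  · apply digits_eq_pw hk _ _ _ h2
    rcases h1 with h1 | rfl
    · exact h1
    · simp; omega

/-! ### Comparing fixed-length words with representations -/

lemma dseq_eq_of_head_ne {k : ℕ} (hk : 2 ≤ k) (a : ℕ) (w : List ℕ) (ha : a ≠ 0) (L m : ℕ)
    (hm : m < k ^ (L + 1)) : dseq k (a :: w) m = occ (a :: w) (pw k (L + 1) m) := by
  induction L with
  | zero => rw [dseq, rep_eq_pw hk 0 m (Or.inr rfl) hm]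
  | succ L ih =>
    rcases le_or_gt (k ^ (L + 1)) m with h | h
    · rw [dseq, rep_eq_pw hk _ m (Or.inl h) hm]
    · have h2 := pw_cons hk (L + 1) m 0 (by omega) h
      rw [zero_mul, zero_add] at h2
      rw [ih h, h2, occ_cons, if_neg, zero_add]
      rw [List.cons_prefix_cons]
      tauto

lemma dseq_eq_of_head_zero {k : ℕ} (hk : 2 ≤ k) (w : List ℕ) (L m : ℕ)
    (hm : m < k ^ L) : dseq k (0 :: w) (k ^ L + m) = occ (0 :: w) (pw k L m) := by
  have h2 := pw_cons hk L m 1 (by omega) hm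
  rw [one_mul] at h2
  have h3 : k ^ L * 2 ≤ k ^ (L + 1) := by rw [pow_succ]; exact Nat.mul_le_mul_left _ hk
  rw [dseq, rep_eq_pw hk L _ (Or.inl (by omega)) (by omega), h2, occ_cons, if_neg, zero_add]
  rw [List.cons_prefix_cons]
  simp

lemma dseq_le_of_lt {k : ℕ} (hk : 2 ≤ k) (w : List ℕ) (s m : ℕ) (hm : m < k ^ (s + 1)) :
    dseq k w m ≤ s + 1 := by
  have hlo : k ^ Nat.log k m ≤ m ∨ Nat.log k m = 0 := by
    rcases Nat.eq_zero_or_pos m with h | h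
    · right; rw [h]; simp
    · left; exact Nat.pow_log_le_self k (by omega)
  have hlog : Nat.log k m < s + 1 := Nat.log_lt_of_lt_pow' (by omega) hm
  have h := occ_le_length w (pw k (Nat.log k m + 1) m)
  rw [pw_length] at h
  rw [dseq, rep_eq_pw hk _ m hlo (Nat.lt_pow_succ_log_self (by omega) m)]
  omega

/-- Just below a power of `k`, up to the last `s` digits a representation consists of digits
`k - 1` only and so does not contain `w`. -/
lemma dseq_crossing_le {k : ℕ} (hk : 2 ≤ k) (w : List ℕ) (h1 : ¬ ∀ d ∈ w, d = k - 1)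
    (L s m : ℕ) (hlo : k ^ L ≤ m ∨ L = 0)
    (hm : k ^ (L + 1) ≤ m + k ^ s)
    (hm2 : m < k ^ (L + 1)) : dseq k w m ≤ s + 1 := by
  rw [dseq, rep_eq_pw hk L m hlo hm2]
  rcases le_or_gt s (L + 1) with h | h
  · obtain ⟨e, he⟩ := Nat.exists_eq_add_of_le' h
    rw [he] at hm hm2 ⊢
    have hks : 0 < k ^ s := by positivity
    have hke : 0 < k ^ e := by positivity
    have hq : m / k ^ s = k ^ e - 1 - 0 := by
      rw [pow_add] at hm hm2
      apply Nat.div_eq_of_lt_le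
      · rw [Nat.sub_zero, Nat.sub_mul]; omega
      · rwa [Nat.sub_zero, Nat.sub_add_cancel hke]
    have h3 := occ_pw_add_le w k e s m
    rw [hq, pw_conj hk e 0 hke, pw_zero, List.map_replicate, Nat.sub_zero,
      occ_replicate _ _ _ h1] at h3
    omega
  · have := occ_le_length w (pw k (L + 1) m)
    rw [pw_length] at this
    omega

/-- Just above a power of `k`, up to the last `s` digits a representation is `10⋯0`, which
contains `w` at most once. -/
lemma dseq_crossing_ge {k : ℕ} (hk : 2 ≤ k) (w : List ℕ) (h0 : ¬ ∀ d ∈ w, d = 0)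
    (L s m : ℕ) (hm : k ^ L ≤ m)
    (hm2 : m < k ^ L + k ^ s) (hm3 : m < k ^ (L + 1)) : dseq k w m ≤ s + 1 := by
  rw [dseq, rep_eq_pw hk L m (Or.inl hm) hm3]
  rcases le_or_gt s L with h | h
  · obtain ⟨e, rfl⟩ := Nat.exists_eq_add_of_le' h
    have hks : 0 < k ^ s := by positivity
    have hke : 0 < k ^ e := by positivity
    have hq : m / k ^ s = 1 * k ^ e + 0 := by
      rw [pow_add] at hm hm2
      apply Nat.div_eq_of_lt_le
      · simpa using hm
      · rw [add_zero, one_mul, Nat.add_mul, one_mul]; exact hm2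
    have h3 := occ_pw_add_le w k (e + 1) s m
    rw [hq, pw_cons hk e 0 1 (by omega) hke, pw_zero, occ_cons, occ_replicate _ _ _ h0] at h3
    rw [show e + s + 1 = e + 1 + s by ring]
    split_ifs at h3 <;> omega
  · have := occ_le_length w (pw k (L + 1) m)
    rw [pw_length] at this
    omega

/-! ### Mirroring windows -/

/-- A window of `dseq k w` with a large letter, read backwards, is a window of the digital
sequence of the complement of `w`. -/
lemma mirror_window {k : ℕ} (hk : 2 ≤ k) {n : ℕ} (w : List ℕ)
    (hwk : ∀ d ∈ w, d < k) (h0 : ¬ ∀ d ∈ w, d = 0) (h1 : ¬ ∀ d ∈ w, d = k - 1) (i : ℕ)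
    (hbig : ∃ x ∈ (List.range n).map (fun j => dseq k w (i + j)), Nat.clog k n + 2 ≤ x) :
    ∃ i', ((List.range n).map fun j => dseq k w (i + j)).reverse =
      (List.range n).map fun j => dseq k (w.map fun d => k - 1 - d) (i' + j) := by
  set L := Nat.log k i with hL
  have hlo : k ^ L ≤ i ∨ L = 0 := by
    rcases Nat.eq_zero_or_pos i with h | h
    · right; rw [hL, h]; simp
    · left; exact Nat.pow_log_le_self k (by omega)
  have hhi : i < k ^ (L + 1) := Nat.lt_pow_succ_log_self (by omega) i
  have hns : n ≤ k ^ Nat.clog k n := Nat.le_pow_clog (by omega) n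
  -- all representations in the window have length `L + 1`
  have hwin : i + n ≤ k ^ (L + 1) := by
    by_contra hc
    obtain ⟨x, hx, hxb⟩ := hbig
    obtain ⟨j, hj, rfl⟩ := List.mem_map.1 hx
    rw [List.mem_range] at hj
    have hle : dseq k w (i + j) ≤ Nat.clog k n + 1 := by
      rcases lt_or_ge (i + j) (k ^ (L + 1)) with h | h
      · exact dseq_crossing_le hk w h1 L _ _ (hlo.imp_left (by omega)) (by omega) h
      · rcases lt_or_ge (i + j) (k ^ (L + 1 + 1)) with hlt | hge
        · exact dseq_crossing_ge hk w h0 (L + 1) _ _ h (by omega) hlt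
        · -- here `k ^ (L + 1) < k ^ s` with `s = ⌈log_k n⌉`, so the representation has at most
          -- `s + 1` digits
          apply dseq_le_of_lt hk
          have e1 : k ^ (L + 1) * 2 ≤ k ^ (L + 1 + 1) := by
            rw [pow_succ k (L + 1)]; exact Nat.mul_le_mul_left _ hk
          have e2 : k ^ Nat.clog k n * 2 ≤ k ^ (Nat.clog k n + 1) := by
            rw [pow_succ]; exact Nat.mul_le_mul_left _ hk
          omega
    omega
  have hocc : ∀ m, m < k ^ (L + 1) →
      occ (w.map fun d => k - 1 - d) (pw k (L + 1) (k ^ (L + 1) - 1 - m))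
        = occ w (pw k (L + 1) m) := by
    intro m hm
    rw [pw_conj hk _ _ hm]
    exact occ_map _ k (by intros; omega) _ _ hwk (pw_lt (by omega) _ _)
  -- a shift `c` (zero or a leading `1`) makes the fixed-length window a window of `dseq`
  obtain ⟨c, hc⟩ : ∃ c, ∀ m < k ^ (L + 1),
      dseq k (w.map fun d => k - 1 - d) (c + m)
        = occ (w.map fun d => k - 1 - d) (pw k (L + 1) m) := by
    cases w with
    | nil => simp at h0
    | cons a w =>
      rw [List.map_cons]
      by_cases ha : k - 1 - a = 0
      · rw [ha]
        exact ⟨k ^ (L + 1), fun m hm => dseq_eq_of_head_zero hk _ _ _ hm⟩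
      · exact ⟨0, fun m hm => by rw [zero_add]; exact dseq_eq_of_head_ne hk _ _ ha _ _ hm⟩
  refine ⟨c + (k ^ (L + 1) - i - n), ?_⟩
  apply List.ext_getElem
  · simp
  · intro j hj1 hj2
    have hj : j < n := by simpa using hj2
    simp only [List.getElem_reverse, List.getElem_map, List.getElem_range, List.length_map,
      List.length_range]
    have e : k ^ (L + 1) - i - n + j = k ^ (L + 1) - 1 - (i + (n - 1 - j)) := by omega
    rw [add_assoc, e, hc _ (by omega), hocc _ (by omega), dseq,
      rep_eq_pw hk L _ (hlo.imp_left (by omega)) (by omega)]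

lemma mirror_factorSet1 {k : ℕ} (hk : 2 ≤ k) {n : ℕ} {N : ℕ}
    (hN : Nat.clog k n + 2 ≤ N) (u : List ℕ) (w : List ℕ) (hwk : ∀ d ∈ w, d < k)
    (h0 : ¬ ∀ d ∈ w, d = 0) (h1 : ¬ ∀ d ∈ w, d = k - 1)
    (h : u ∈ factorSet1 (dseq k w) n N) :
    u.reverse ∈ factorSet1 (dseq k (w.map fun d => k - 1 - d)) n N := by
  obtain ⟨⟨⟨i, hi⟩, hle⟩, hnot⟩ := h
  have hx : ∃ x ∈ u, ¬ x ≤ N - 1 := by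
    by_contra hc
    push Not at hc
    exact hnot ⟨⟨i, hi⟩, hc⟩
  obtain ⟨x, hxu, hxN⟩ := hx
  obtain ⟨i', hi'⟩ := mirror_window hk w hwk h0 h1 i ⟨x, hi ▸ hxu, by omega⟩
  rw [← hi] at hi'
  refine ⟨⟨⟨i', hi'⟩, fun y hy => hle y (List.mem_reverse.1 hy)⟩, fun hc => hxN ?_⟩
  exact hc.2 x (List.mem_reverse.2 hxu)

theorem stmt19 (k : ℕ) (hk : 2 ≤ k) (n : ℕ) (hn : 1 ≤ n) (N : ℕ)
    (hN : Nat.clog k n + 2 ≤ N) (u : List ℕ) (hu : u.length = n) (huN : ∀ x ∈ u, x ≤ N)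
    (w : List ℕ) (q : ℕ) (hq : 1 ≤ q) (hwq : w.length = q) (hwk : ∀ d ∈ w, d < k)
    (hnp : ¬ ((∀ d ∈ w, d = 0) ∨ (∀ d ∈ w, d = k - 1))) :
    u ∈ factorSet1 (dseq k w) n N ↔
      u.reverse ∈ factorSet1 (dseq k (w.map fun d => k - 1 - d)) n N := by
  obtain ⟨h0, h1⟩ := not_or.1 hnp
  refine ⟨mirror_factorSet1 hk hN u w hwk h0 h1, fun h => ?_⟩
  -- complementation and reversal are involutions
  have h2 := mirror_factorSet1 hk hN u.reverse (w.map fun d => k - 1 - d)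
    (by simp only [List.mem_map]; rintro d ⟨e, -, rfl⟩; omega)
    (fun hc => h1 fun d hd => by
      have := hc _ (List.mem_map_of_mem hd)
      have := hwk d hd
      omega)
    (fun hc => h0 fun d hd => by
      have := hc _ (List.mem_map_of_mem hd)
      have := hwk d hd
      omega) h
  have hinv : (w.map fun d => k - 1 - d).map (fun d => k - 1 - d) = w := by
    rw [List.map_map]
    conv_rhs => rw [← List.map_id w]
    apply List.map_congr_left
    intro d hd
    have := hwk d hd
    simp only [Function.comp, id]
    omega
  rwa [List.reverse_reverse, hinv] at h2
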